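/- arXiv:1105.5910 — 6 statements merged into one kernel-verified Lean document; each statement's English description precedes it below -/
import Mathlib

section
/- Let λ be a partition and let k be an integer with 1 ≤ k ≤ λ_1. Then the following identity holds in the rational function field ℚ(q, y): (1/(q^{λ_1} y − 1)) · ∏_{i=1}^{λ'_k} (q^{λ_i − i + 1} y − 1)/(q^{λ_i − i} y − 1) = (1/(q^{−λ'_k + k − 1} y − 1)) · ∏_{j=k}^{λ_1} (q^{−λ'_j + j − 1} y − 1)/(q^{−λ'_j + j} y − 1). -/
/-- A partition, encoded as a weakly decreasing, eventually-zero sequence of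
natural numbers; `parts i` is the `(i+1)`-st part `λ_{i+1}` (0-indexed rows). -/
structure Ptn where
  parts : ℕ → ℕ
  antitone' : Antitone parts
  eventually_zero : ∃ N, ∀ i, N ≤ i → parts i = 0

namespace Ptn

/-- `conj p k` is the conjugate-partition part `λ'_{k+1} = #{i ≥ 1 : λ_i ≥ k+1}`. -/
noncomputable def conj (p : Ptn) (k : ℕ) : ℕ := Nat.card {i : ℕ // k < p.parts i}

/-- `|λ| = Σ_{i ≥ 1} λ_i`. -/
noncomputable def size (p : Ptn) : ℕ := ∑ᶠ i, p.parts i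

/-- `n(λ) = Σ_{i ≥ 1} (i-1) λ_i`. -/
noncomputable def nn (p : Ptn) : ℕ := ∑ᶠ i, i * p.parts i

/-- The empty partition. -/
def empty : Ptn := ⟨fun _ => 0, fun _ _ _ => le_rfl, ⟨0, fun _ _ => rfl⟩⟩

end Ptn

/-- The generalised hook length `h_{i,j}^{λ,μ} = λ_i - i + μ'_j - j + 1`, for the node
in (0-indexed) row `i` and column `j`, i.e. the 1-indexed node `(i+1, j+1)`. -/
noncomputable def ghook (lam mu : Ptn) (i j : ℕ) : ℤ :=
  (lam.parts i : ℤ) - (i + 1) + (mu.conj j : ℤ) - (j + 1) + 1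

/-- The rational function field `ℚ(q, y)` in two indeterminates. -/
noncomputable abbrev Kqy : Type := FractionRing (MvPolynomial (Fin 2) ℚ)

/-- The indeterminate `q` of `ℚ(q, y)`. -/
noncomputable def qv : Kqy := algebraMap (MvPolynomial (Fin 2) ℚ) Kqy (MvPolynomial.X 0)

/-- The indeterminate `y` of `ℚ(q, y)`. -/
noncomputable def yv : Kqy := algebraMap (MvPolynomial (Fin 2) ℚ) Kqy (MvPolynomial.X 1)

theorem Ptn.lt_conj_iff (p : Ptn) (k i : ℕ) : i < p.conj k ↔ k < p.parts i := by
  classical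
  obtain ⟨N, hN⟩ := p.eventually_zero
  have hex : ∃ m, p.parts m ≤ k := ⟨N, by simp [hN N le_rfl]⟩
  have hmem : ∀ i, k < p.parts i ↔ i < Nat.find hex := by
    intro i
    refine ⟨fun h => ?_, fun h => not_le.mp (Nat.find_min hex h)⟩
    by_contra! hle
    exact absurd ((p.antitone' hle).trans (Nat.find_spec hex)) (not_le.mpr h)
  have hcard : p.conj k = Nat.find hex := by
    simp only [Ptn.conj, hmem]
    exact (Nat.card_congr (Fin.equivSubtype (n := Nat.find hex)).symm).trans (Nat.card_fin _)
  rw [hcard, hmem]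

theorem Ptn.conj_antitone (p : Ptn) : Antitone p.conj := by
  intro k l hkl
  by_contra! h
  have hl := (p.lt_conj_iff l _).mp h
  exact absurd ((p.lt_conj_iff k _).mpr (hkl.trans_lt hl)) (lt_irrefl _)

theorem qv_zpow_mul_yv_sub_one_ne_zero (n : ℤ) : qv ^ n * yv - 1 ≠ 0 := by
  have hq : qv ≠ 0 := by
    simp [qv, MvPolynomial.X_ne_zero]
  have hinj := IsFractionRing.injective (MvPolynomial (Fin 2) ℚ) Kqy
  intro h
  rw [sub_eq_zero] at h
  obtain ⟨a, rfl | rfl⟩ := n.eq_nat_or_neg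
  · rw [zpow_natCast, qv, yv, ← map_pow, ← map_mul,
      ← map_one (algebraMap (MvPolynomial (Fin 2) ℚ) Kqy)] at h
    simpa using congrArg (MvPolynomial.eval ![(1 : ℚ), 0]) (hinj h)
  · rw [zpow_neg, zpow_natCast, inv_mul_eq_one₀ (pow_ne_zero _ hq), qv, yv, ← map_pow] at h
    simpa using congrArg (MvPolynomial.eval ![(1 : ℚ), 0]) (hinj h)

theorem Finset.prod_Ico_div_succ_of_ne_zero {K : Type*} [Field K] (g : ℕ → K)
    (hg : ∀ i, g i ≠ 0) {m n : ℕ} (hmn : m ≤ n) :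
    ∏ i ∈ Finset.Ico m n, g i / g (i + 1) = g m / g n := by
  induction n, hmn using Nat.le_induction with
  | base => simp [hg]
  | succ n hmn ih => rw [Finset.prod_Ico_succ_top hmn, ih, div_mul_div_cancel₀ (hg n)]

/-- The identity for an arbitrary nowhere vanishing function `f` on the contents, with
columns indexed from zero; `k = p.parts 0` is the empty case. -/
theorem Ptn.prod_rows_eq_prod_columns {K : Type*} [Field K] (f : ℤ → K) (hf : ∀ n, f n ≠ 0)
    (p : Ptn) (k : ℕ) (hk : k ≤ p.parts 0) :
    (f (p.parts 0))⁻¹ *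
      ∏ i ∈ Finset.range (p.conj k), f ((p.parts i : ℤ) - i) / f ((p.parts i : ℤ) - i - 1)
    = (f (k - p.conj k))⁻¹ *
      ∏ j ∈ Finset.Ico k (p.parts 0), f (j - p.conj j) / f (j + 1 - p.conj j) := by
  induction hk using Nat.decreasingInduction with
  | self =>
    have h0 : p.conj (p.parts 0) = 0 := by
      by_contra h
      exact lt_irrefl _ ((p.lt_conj_iff _ 0).mp (Nat.pos_of_ne_zero h))
    simp [h0]
  | of_succ k hk ih =>
    have hstrip : ∏ i ∈ Finset.Ico (p.conj (k + 1)) (p.conj k),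
        f ((p.parts i : ℤ) - i) / f ((p.parts i : ℤ) - i - 1)
        = f (k + 1 - p.conj (k + 1)) / f (k + 1 - p.conj k) := by
      rw [← Finset.prod_Ico_div_succ_of_ne_zero (fun i : ℕ => f (k + 1 - i)) (fun _ => hf _)
        (p.conj_antitone k.le_succ)]
      refine Finset.prod_congr rfl fun i hi => ?_
      rw [Finset.mem_Ico, p.lt_conj_iff, ← not_lt, p.lt_conj_iff] at hi
      have hi' : p.parts i = k + 1 := by omega
      rw [hi']
      push_cast
      rw [sub_sub _ (i : ℤ) 1]
    rw [← Finset.prod_range_mul_prod_Ico _ (p.conj_antitone k.le_succ), ← mul_assoc, ih, hstrip,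
      Finset.prod_eq_prod_Ico_succ_bot hk]
    have h₁ := hf (k - p.conj k)
    have h₂ := hf (k + 1 - p.conj k)
    have h₃ := hf (k + 1 - p.conj (k + 1))
    push_cast
    field_simp

/-- For a partition `λ` and `1 ≤ k ≤ λ_1`, the identity in `ℚ(q,y)`:
`(q^{λ_1} y - 1)⁻¹ ∏_{i=1}^{λ'_k} (q^{λ_i-i+1}y-1)/(q^{λ_i-i}y-1)
  = (q^{-λ'_k+k-1} y - 1)⁻¹ ∏_{j=k}^{λ_1} (q^{-λ'_j+j-1}y-1)/(q^{-λ'_j+j}y-1)`. -/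
theorem stmt1 (p : Ptn) (k : ℕ) (hk1 : 1 ≤ k) (hk2 : k ≤ p.parts 0) :
    (qv ^ (p.parts 0 : ℤ) * yv - 1)⁻¹ *
      ∏ i ∈ Finset.range (p.conj (k - 1)),
        (qv ^ ((p.parts i : ℤ) - i) * yv - 1) /
          (qv ^ ((p.parts i : ℤ) - i - 1) * yv - 1)
    = (qv ^ (-(p.conj (k - 1) : ℤ) + k - 1) * yv - 1)⁻¹ *
      ∏ j ∈ Finset.Icc k (p.parts 0),
        (qv ^ (-(p.conj (j - 1) : ℤ) + j - 1) * yv - 1) /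
          (qv ^ (-(p.conj (j - 1) : ℤ) + j) * yv - 1) := by
  obtain ⟨k, rfl⟩ := Nat.exists_eq_add_of_le' hk1
  have h := p.prod_rows_eq_prod_columns (fun n => qv ^ n * yv - 1)
    qv_zpow_mul_yv_sub_one_ne_zero k (by omega)
  rw [← Finset.Ico_add_one_right_eq_Icc, ← Finset.prod_Ico_add' _ k (p.parts 0) 1]
  simp only [Nat.add_sub_cancel]
  have hleft (a b : ℕ) : (b : ℤ) + 1 - a - 1 = b - a := by omega
  have hright (a b : ℕ) : -(a : ℤ) + ((b + 1 : ℕ) : ℤ) = b + 1 - a := by omega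
  simp only [hleft, hright]
  exact h
end

section
/- Let λ and μ be partitions and let i be an index such that (i, λ_i) is a removable node of λ (so λ_i > 0 and λ'_{λ_i} = i). Then the following identity holds in ℚ(q, Q_s, Q_t): (q^{λ_i−i} Q_s − q^{μ_1} Q_t) · ∏_{k=1}^{μ_1} (q^{λ_i−i} Q_s − q^{k−1−μ'_k} Q_t)/(q^{λ_i−i} Q_s − q^{k−μ'_k} Q_t) = q^{−μ'_{λ_i}} Q_t (q^{μ'_{λ_i} − i + 1} Q_s Q_t^{−1} − 1) · A · B, where A := ∏_{k=1}^{λ_i−1} (q^{λ_i−i+μ'_k−k+1} Q_s Q_t^{−1} − 1)/(q^{λ_i−i+μ'_k−k} Q_s Q_t^{−1} − 1) and B := ∏_{k=1}^{μ'_{λ_i}} (q^{μ_k−k+i−λ_i+1} Q_t Q_s^{−1} − 1)/(q^{μ_k−k+i−λ_i} Q_t Q_s^{−1} − 1). -/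
/-- The rational function field `ℚ(q, Q_s, Q_t)` in three indeterminates. -/
noncomputable abbrev K3 : Type := FractionRing (MvPolynomial (Fin 3) ℚ)

/-- The indeterminate `q`. -/
noncomputable def q3 : K3 := algebraMap (MvPolynomial (Fin 3) ℚ) K3 (MvPolynomial.X 0)

/-- The indeterminate `Q_s`. -/
noncomputable def Qs3 : K3 := algebraMap (MvPolynomial (Fin 3) ℚ) K3 (MvPolynomial.X 1)

/-- The indeterminate `Q_t`. -/
noncomputable def Qt3 : K3 := algebraMap (MvPolynomial (Fin 3) ℚ) K3 (MvPolynomial.X 2)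

namespace Ptn

/-- The conjugate partition is characterised by the Galois-type equivalence
`k < μ'_a ↔ a < μ_k` (in 0-indexed form). -/
theorem lt_conj_iff_s4 (p : Ptn) (a k : ℕ) : k < p.conj a ↔ a < p.parts k := by
  classical
  obtain ⟨N, hN⟩ := p.eventually_zero
  have hex : ∃ n, p.parts n ≤ a := ⟨N, by simp [hN N le_rfl]⟩
  have key : ∀ i, a < p.parts i ↔ i < Nat.find hex := by
    intro i
    rw [Nat.lt_find_iff]
    exact ⟨fun h m hm => not_le.2 (h.trans_le (p.antitone' hm)), fun h => not_le.1 (h i le_rfl)⟩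
  have hcard : p.conj a = Nat.find hex := by
    rw [conj, Nat.subtype_card (Finset.range (Nat.find hex)), Finset.card_range]
    exact fun i => Finset.mem_range.trans (key i).symm
  rw [hcard, key]

theorem conj_antitone_s4 (p : Ptn) : Antitone p.conj := by
  intro a b hab
  by_contra! h
  exact absurd ((p.lt_conj_iff_s4 a _).2 (hab.trans_lt ((p.lt_conj_iff_s4 b _).1 h))) (lt_irrefl _)

/-- The cut of the boundary product at column `a`: factors for the columns before `a`
and for the rows reaching beyond column `a`. -/
noncomputable def cutProd {K : Type*} [Field K] (p : Ptn) (f : ℤ → K) (a : ℕ) : K :=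
  f (a - p.conj a) *
    (∏ k ∈ Finset.range a, f (k - p.conj k) / f (k + 1 - p.conj k)) *
    ∏ k ∈ Finset.range (p.conj a), f (p.parts k - k) / f (p.parts k - k - 1)

theorem prod_Ico_div_telescope {K : Type*} [Field K] (f : ℤ → K) (hf : ∀ m, f m ≠ 0) (b : ℤ)
    {m n : ℕ} (h : m ≤ n) :
    ∏ k ∈ Finset.Ico m n, f (b - k) / f (b - k - 1) = f (b - m) / f (b - n) := by
  induction n, h using Nat.le_induction with
  | base => simp [hf]
  | succ n h ih =>
    rw [Finset.prod_Ico_succ_top h, ih]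
    have h1 := hf (b - n)
    push_cast
    rw [← sub_sub]
    field_simp

theorem cutProd_succ {K : Type*} [Field K] (p : Ptn) (f : ℤ → K) (hf : ∀ m, f m ≠ 0) (a : ℕ) :
    p.cutProd f (a + 1) = p.cutProd f a := by
  have hle : p.conj (a + 1) ≤ p.conj a := p.conj_antitone_s4 (Nat.le_succ a)
  have hparts : ∀ k ∈ Finset.Ico (p.conj (a + 1)) (p.conj a),
      f (p.parts k - k) / f (p.parts k - k - 1) =
        f (((a : ℤ) + 1) - k) / f (((a : ℤ) + 1) - k - 1) := by
    intro k hk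
    rw [Finset.mem_Ico] at hk
    have h1 := (p.lt_conj_iff_s4 a k).1 hk.2
    have h2 := mt (p.lt_conj_iff_s4 (a + 1) k).2 (not_lt.2 hk.1)
    have h3 : p.parts k = a + 1 := by omega
    rw [h3]
    push_cast
    rfl
  unfold cutProd
  rw [← Finset.prod_range_mul_prod_Ico _ hle, Finset.prod_congr rfl hparts,
    prod_Ico_div_telescope f hf _ hle, Finset.prod_range_succ]
  have h1 := hf ((a : ℤ) + 1 - p.conj a)
  push_cast
  field_simp

theorem cutProd_eq {K : Type*} [Field K] (p : Ptn) (f : ℤ → K) (hf : ∀ m, f m ≠ 0) (a b : ℕ) :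
    p.cutProd f a = p.cutProd f b := by
  have h0 : ∀ n, p.cutProd f n = p.cutProd f 0 := by
    intro n
    induction n with
    | zero => rfl
    | succ n ih => rw [cutProd_succ p f hf, ih]
  rw [h0 a, h0 b]

theorem cutProd_parts_zero {K : Type*} [Field K] (p : Ptn) (f : ℤ → K) :
    p.cutProd f (p.parts 0) = f (p.parts 0) *
      ∏ k ∈ Finset.range (p.parts 0), f (k - p.conj k) / f (k + 1 - p.conj k) := by
  have h : p.conj (p.parts 0) = 0 := by
    by_contra h
    exact absurd ((p.lt_conj_iff_s4 _ 0).1 (Nat.pos_of_ne_zero h)) (lt_irrefl _)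
  simp [cutProd, h]

end Ptn

theorem q3_ne_zero : q3 ≠ 0 := by
  simp [q3, MvPolynomial.X_ne_zero]

theorem Qs3_ne_zero : Qs3 ≠ 0 := by
  simp [Qs3, MvPolynomial.X_ne_zero]

theorem Qt3_ne_zero : Qt3 ≠ 0 := by
  simp [Qt3, MvPolynomial.X_ne_zero]

theorem q3_pow_mul_Qs3_ne (a b : ℕ) : q3 ^ a * Qs3 ≠ q3 ^ b * Qt3 := by
  intro h
  simp only [q3, Qs3, Qt3, ← map_pow, ← map_mul] at h
  have h1 := IsFractionRing.injective (MvPolynomial (Fin 3) ℚ) K3 h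
  have h2 := congrArg (MvPolynomial.eval ![1, 1, 0]) h1
  simp at h2

theorem q3_zpow_mul_Qs3_sub_ne_zero (a b : ℤ) : q3 ^ a * Qs3 - q3 ^ b * Qt3 ≠ 0 := by
  intro h
  have hq := q3_ne_zero
  have key : ∀ m : ℤ, q3 ^ (m + (a.natAbs + b.natAbs : ℕ)) = q3 ^ m * q3 ^ (a.natAbs + b.natAbs) :=
    fun m => by rw [zpow_add₀ hq, zpow_natCast]
  apply q3_pow_mul_Qs3_ne (a + (a.natAbs + b.natAbs : ℕ)).toNat (b + (a.natAbs + b.natAbs : ℕ)).toNat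
  rw [← zpow_natCast, ← zpow_natCast, Int.toNat_of_nonneg (by omega),
    Int.toNat_of_nonneg (by omega), key, key]
  linear_combination q3 ^ (a.natAbs + b.natAbs) * h

theorem columnFactor_eq {K : Type*} [Field K] {q s t : K} (hq : q ≠ 0) (ht : t ≠ 0) (e d : ℤ) :
    (q ^ (e + d) * s * t⁻¹ - 1) / (q ^ (e + d - 1) * s * t⁻¹ - 1) =
      q * ((q ^ e * s - q ^ (-d) * t) / (q ^ e * s - q ^ (1 - d) * t)) := by
  have h1 : q ^ (e + d) * s * t⁻¹ - 1 = q ^ d * t⁻¹ * (q ^ e * s - q ^ (-d) * t) := by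
    rw [zpow_add₀ hq, zpow_neg]
    field_simp
  have h2 : q ^ (e + d - 1) * s * t⁻¹ - 1 =
      q ^ d * t⁻¹ * q⁻¹ * (q ^ e * s - q ^ (1 - d) * t) := by
    rw [zpow_sub₀ hq, zpow_sub₀ hq, zpow_add₀ hq, zpow_one]
    field_simp
  have hd : q ^ d * t⁻¹ ≠ 0 := mul_ne_zero (zpow_ne_zero _ hq) (inv_ne_zero ht)
  rw [h1, h2, mul_assoc (q ^ d * t⁻¹), mul_div_mul_left _ _ hd, div_mul_eq_div_div, div_inv_eq_mul,
    mul_comm, mul_div_assoc]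

theorem rowFactor_eq {K : Type*} [Field K] {q s t : K} (hq : q ≠ 0) (hs : s ≠ 0) (e d : ℤ) :
    (q ^ (d - e) * t * s⁻¹ - 1) / (q ^ (d - e - 1) * t * s⁻¹ - 1) =
      (q ^ e * s - q ^ d * t) / (q ^ e * s - q ^ (d - 1) * t) := by
  have h : ∀ m : ℤ, q ^ (m - e) * t * s⁻¹ - 1 = -(q ^ e * s)⁻¹ * (q ^ e * s - q ^ m * t) := by
    intro m
    have he : q ^ e ≠ 0 := zpow_ne_zero _ hq
    rw [zpow_sub₀ hq]
    field_simp
    ring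
  have hne : -(q ^ e * s)⁻¹ ≠ 0 := neg_ne_zero.2 (inv_ne_zero (mul_ne_zero (zpow_ne_zero _ hq) hs))
  rw [h d, show d - e - 1 = d - 1 - e by ring, h (d - 1), mul_div_mul_left _ _ hne]

/-- Let `λ, μ` be partitions and let `(i, λ_i)` be a removable node of `λ`
(here `i = i0 + 1` is the 1-indexed row, so removability means `λ_{i0+1} > 0` and
`λ_{i0+2} < λ_{i0+1}`; equivalently `λ_i > 0` and `λ'_{λ_i} = i`). Then, in `ℚ(q,Q_s,Q_t)`:
`(q^{λ_i-i}Q_s - q^{μ_1}Q_t) ∏_{k=1}^{μ_1} (q^{λ_i-i}Q_s - q^{k-1-μ'_k}Q_t)/(q^{λ_i-i}Q_s - q^{k-μ'_k}Q_t)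
 = q^{-μ'_{λ_i}} Q_t (q^{μ'_{λ_i}-i+1} Q_s Q_t⁻¹ - 1) · A · B`. -/
theorem stmt4 (lam mu : Ptn) (i0 : ℕ) (hpos : 0 < lam.parts i0)
    (hrem : lam.parts (i0 + 1) < lam.parts i0) :
    (q3 ^ ((lam.parts i0 : ℤ) - (i0 + 1)) * Qs3 - q3 ^ (mu.parts 0 : ℤ) * Qt3) *
      ∏ k ∈ Finset.range (mu.parts 0),
        (q3 ^ ((lam.parts i0 : ℤ) - (i0 + 1)) * Qs3 -
            q3 ^ (((k : ℤ) + 1) - 1 - (mu.conj k : ℤ)) * Qt3) /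
          (q3 ^ ((lam.parts i0 : ℤ) - (i0 + 1)) * Qs3 -
            q3 ^ (((k : ℤ) + 1) - (mu.conj k : ℤ)) * Qt3)
    = q3 ^ (-(mu.conj (lam.parts i0 - 1) : ℤ)) * Qt3 *
        (q3 ^ ((mu.conj (lam.parts i0 - 1) : ℤ) - (i0 + 1) + 1) * Qs3 * Qt3⁻¹ - 1) *
      (∏ k ∈ Finset.range (lam.parts i0 - 1),
        (q3 ^ ((lam.parts i0 : ℤ) - (i0 + 1) + (mu.conj k : ℤ) - ((k : ℤ) + 1) + 1) *
            Qs3 * Qt3⁻¹ - 1) /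
          (q3 ^ ((lam.parts i0 : ℤ) - (i0 + 1) + (mu.conj k : ℤ) - ((k : ℤ) + 1)) *
            Qs3 * Qt3⁻¹ - 1)) *
      (∏ k ∈ Finset.range (mu.conj (lam.parts i0 - 1)),
        (q3 ^ ((mu.parts k : ℤ) - ((k : ℤ) + 1) + ((i0 : ℤ) + 1) - (lam.parts i0 : ℤ) + 1) *
            Qt3 * Qs3⁻¹ - 1) /
          (q3 ^ ((mu.parts k : ℤ) - ((k : ℤ) + 1) + ((i0 : ℤ) + 1) - (lam.parts i0 : ℤ)) *
            Qt3 * Qs3⁻¹ - 1)) := by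
  obtain ⟨a, ha⟩ : ∃ a, lam.parts i0 = a + 1 := ⟨lam.parts i0 - 1, by omega⟩
  have hq := q3_ne_zero
  have hs := Qs3_ne_zero
  have ht := Qt3_ne_zero
  rw [ha, Nat.add_sub_cancel]
  set e : ℤ := ((a + 1 : ℕ) : ℤ) - (i0 + 1) with he
  set f : ℤ → K3 := fun m => q3 ^ e * Qs3 - q3 ^ m * Qt3 with hf
  have hcut := mu.cutProd_eq f (fun m => q3_zpow_mul_Qs3_sub_ne_zero e m) (mu.parts 0) a
  rw [Ptn.cutProd_parts_zero] at hcut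
  have hlead : q3 ^ (-(mu.conj a : ℤ)) * Qt3 *
      (q3 ^ ((mu.conj a : ℤ) - (i0 + 1) + 1) * Qs3 * Qt3⁻¹ - 1) =
      (q3 ^ a)⁻¹ * f (a - mu.conj a) := by
    have h1 : (mu.conj a : ℤ) - (i0 + 1) + 1 = mu.conj a + e - a := by
      rw [he]; push_cast; ring
    have h2 : (a : ℤ) - mu.conj a = a + -(mu.conj a : ℤ) := by ring
    simp only [hf]
    rw [h1, h2, zpow_sub₀ hq, zpow_add₀ hq, zpow_add₀ hq, zpow_neg, zpow_natCast, zpow_natCast]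
    field_simp
  have hA : ∏ k ∈ Finset.range a,
      (q3 ^ (e + (mu.conj k : ℤ) - ((k : ℤ) + 1) + 1) * Qs3 * Qt3⁻¹ - 1) /
        (q3 ^ (e + (mu.conj k : ℤ) - ((k : ℤ) + 1)) * Qs3 * Qt3⁻¹ - 1) =
      q3 ^ a * ∏ k ∈ Finset.range a, f (k - mu.conj k) / f (k + 1 - mu.conj k) := by
    rw [← Finset.card_range a, ← Finset.prod_const, Finset.card_range, ← Finset.prod_mul_distrib]
    refine Finset.prod_congr rfl fun k _ => ?_
    have h := columnFactor_eq (s := Qs3) hq ht e ((mu.conj k : ℤ) - k)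
    rw [show e + ((mu.conj k : ℤ) - k) = e + mu.conj k - (k + 1) + 1 by ring, add_sub_cancel_right,
      show -((mu.conj k : ℤ) - k) = k - mu.conj k by ring,
      show 1 - ((mu.conj k : ℤ) - k) = k + 1 - mu.conj k by ring] at h
    exact h
  have hB : ∏ k ∈ Finset.range (mu.conj a),
      (q3 ^ ((mu.parts k : ℤ) - ((k : ℤ) + 1) + ((i0 : ℤ) + 1) - ((a + 1 : ℕ) : ℤ) + 1) *
          Qt3 * Qs3⁻¹ - 1) /
        (q3 ^ ((mu.parts k : ℤ) - ((k : ℤ) + 1) + ((i0 : ℤ) + 1) - ((a + 1 : ℕ) : ℤ)) *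
          Qt3 * Qs3⁻¹ - 1) =
      ∏ k ∈ Finset.range (mu.conj a), f (mu.parts k - k) / f (mu.parts k - k - 1) := by
    refine Finset.prod_congr rfl fun k _ => ?_
    rw [← rowFactor_eq hq hs e ((mu.parts k : ℤ) - k), he]
    congr 5 <;> ring_nf
  rw [hlead, hA, hB]
  simp only [add_sub_cancel_right]
  refine hcut.trans ?_
  have hqa : q3 ^ a ≠ 0 := pow_ne_zero _ hq
  rw [Ptn.cutProd, mul_mul_mul_comm, inv_mul_cancel₀ hqa, one_mul]
end

section
/- Let l, n be positive integers, let K be a field, and let θ : ℤ[q^{±1}, Q_0^{±1}, …, Q_{l−1}^{±1}] → K be a ring homomorphism. Define P(q) := ∏_{i=1}^{n} (1 + q + ⋯ + q^{i−1}) · ∏_{0≤s<t≤l−1} ∏_{−n<k<n} (q^k Q_s − Q_t), and for each l-partition λ of n define s_λ(q) := (−1)^{n(l−1)} q^{−n(λ̄)} · ∏_{s=0}^{l−1} ∏_{(i,j)∈[λ^s]} ( [h_{i,j}^{λ^s,λ^s}]_q · ∏_{0≤t≤l−1, t≠s} (q^{h_{i,j}^{λ^s,λ^t}} Q_s Q_t^{−1}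 − 1) ), both elements of ℤ[q^{±1}, Q_0^{±1}, …, Q_{l−1}^{±1}]. Then θ(P(q)) ≠ 0 if and only if θ(s_λ(q)) ≠ 0 for every l-partition λ of n. (This is Ariki's semisimplicity criterion: the specialised Ariki–Koike algebra is split semisimple exactly when all specialised Schur elements are nonzero.) -/
namespace Ptn

theorem conj_eq_card_filter (p : Ptn) {N : ℕ} (hN : ∀ i, N ≤ i → p.parts i = 0) (k : ℕ) :
    p.conj k = ((Finset.range N).filter fun i => k < p.parts i).card := by
  refine Nat.subtype_card _ fun i => ?_
  have := hN i
  simp only [Finset.mem_filter, Finset.mem_range]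
  grind

theorem size_eq_sum_range (p : Ptn) {N : ℕ} (hN : ∀ i, N ≤ i → p.parts i = 0) :
    p.size = ∑ i ∈ Finset.range N, p.parts i := by
  refine finsum_eq_sum_of_support_subset _ fun i hi => ?_
  have := hN i
  simp only [Function.mem_support, Finset.coe_range, Set.mem_Iio] at hi ⊢
  grind

theorem conj_le_size (p : Ptn) (k : ℕ) : p.conj k ≤ p.size := by
  obtain ⟨N, hN⟩ := p.eventually_zero
  rw [p.conj_eq_card_filter hN, p.size_eq_sum_range hN, Finset.card_filter]
  refine Finset.sum_le_sum fun i _ => ?_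
  split_ifs <;> omega

/-- The row index of a node is smaller than the length of the column containing it. -/
theorem lt_conj (p : Ptn) {i j : ℕ} (hj : j < p.parts i) : i < p.conj j := by
  obtain ⟨N, hN⟩ := p.eventually_zero
  rw [p.conj_eq_card_filter hN, ← Nat.succ_le_iff]
  calc i + 1 = (Finset.range (i + 1)).card := (Finset.card_range _).symm
    _ ≤ _ := Finset.card_le_card fun r hr => by
      have h : p.parts i ≤ p.parts r := p.antitone' (by simpa [Nat.lt_succ_iff] using hr)
      have := hN r
      simp only [Finset.mem_filter, Finset.mem_range]
      grind

/-- The row and the column through a node overlap only in that node. -/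
theorem parts_add_conj_le (p : Ptn) {i j : ℕ} (hj : j < p.parts i) :
    p.parts i + p.conj j ≤ p.size + 1 := by
  obtain ⟨N, hN⟩ := p.eventually_zero
  have hi : i ∈ Finset.range N := by
    have := hN i
    simp only [Finset.mem_range]
    grind
  rw [p.conj_eq_card_filter hN, p.size_eq_sum_range hN, Finset.card_filter,
    ← Finset.add_sum_erase _ _ hi, ← Finset.add_sum_erase _ p.parts hi]
  have h : (∑ r ∈ (Finset.range N).erase i, if j < p.parts r then 1 else 0) ≤
      ∑ r ∈ (Finset.range N).erase i, p.parts r :=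
    Finset.sum_le_sum fun r _ => by split_ifs <;> omega
  rw [if_pos hj]
  omega

/-- The partition with the single part `n`. -/
def row (n : ℕ) : Ptn where
  parts i := if i = 0 then n else 0
  antitone' a b hab := by dsimp only; split_ifs <;> omega
  eventually_zero := ⟨1, fun i hi => if_neg (by omega)⟩

theorem row_parts_eq_zero (n i : ℕ) (hi : 1 ≤ i) : (row n).parts i = 0 :=
  if_neg (by omega)

@[simp]
theorem row_parts_zero (n : ℕ) : (row n).parts 0 = n := rfl

@[simp]
theorem size_row (n : ℕ) : (row n).size = n := by
  simp [size_eq_sum_range _ (row_parts_eq_zero n)]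

theorem conj_row {n j : ℕ} (hj : j < n) : (row n).conj j = 1 := by
  simp [conj_eq_card_filter _ (row_parts_eq_zero n), Finset.filter_singleton, hj]

@[simp]
theorem size_empty : empty.size = 0 := by
  simp [empty, size]

@[simp]
theorem conj_empty (k : ℕ) : empty.conj k = 0 := by
  simp [empty, conj]

end Ptn

theorem ghook_self_pos (lam : Ptn) {i j : ℕ} (hj : j < lam.parts i) : 0 < ghook lam lam i j := by
  have := lam.lt_conj hj
  unfold ghook
  omega

theorem ghook_self_le (lam : Ptn) {i j : ℕ} (hj : j < lam.parts i) :
    ghook lam lam i j ≤ lam.size := by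
  have := lam.parts_add_conj_le hj
  unfold ghook
  omega

theorem neg_size_lt_ghook (lam mu : Ptn) {i j : ℕ} (hj : j < lam.parts i) :
    -(lam.size : ℤ) < ghook lam mu i j := by
  have := lam.lt_conj hj
  have := lam.parts_add_conj_le hj
  unfold ghook
  omega

theorem ghook_lt_size_add_size (lam mu : Ptn) {i j : ℕ} (hj : j < lam.parts i) :
    ghook lam mu i j < lam.size + mu.size := by
  have := lam.lt_conj hj
  have := lam.parts_add_conj_le hj
  have := mu.conj_le_size j
  unfold ghook
  omega

theorem ghook_row_self {n j : ℕ} (hj : j < n) :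
    ghook (Ptn.row n) (Ptn.row n) 0 j = (n - j : ℕ) := by
  rw [ghook, Ptn.conj_row hj, Ptn.row_parts_zero]
  omega

theorem ghook_row_empty {n j : ℕ} (hj : j < n) :
    ghook (Ptn.row n) Ptn.empty 0 j = (n - 1 - j : ℕ) := by
  rw [ghook, Ptn.conj_empty, Ptn.row_parts_zero]
  omega

section SchurElement

variable {l n : ℕ} {K : Type*} [Field K]

/-- The contribution of the node in row `i` and column `j` of the `s`-th component to the
specialised Schur element. -/
noncomputable def schurFactor (qv : K) (Qv : Fin l → K) (Λ : Fin l → Ptn) (s : Fin l)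
    (i j : ℕ) : K :=
  (∑ a ∈ Finset.range (ghook (Λ s) (Λ s) i j).toNat, qv ^ a) *
    ∏ t ∈ Finset.univ.erase s, (qv ^ (ghook (Λ s) (Λ t) i j) * Qv s * (Qv t)⁻¹ - 1)

/-- The `l`-partition whose only nonempty component is a single row of length `n` at `s`. -/
def rowAt (n : ℕ) (s : Fin l) : Fin l → Ptn :=
  fun t => if t = s then Ptn.row n else Ptn.empty

@[simp]
theorem rowAt_self (s : Fin l) : rowAt n s s = Ptn.row n := if_pos rfl

theorem rowAt_of_ne {s t : Fin l} (h : t ≠ s) : rowAt n s t = Ptn.empty := if_neg h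

theorem sum_size_rowAt (s : Fin l) : ∑ t, (rowAt n s t).size = n := by
  rw [Fintype.sum_eq_single s fun t ht => by rw [rowAt_of_ne ht, Ptn.size_empty], rowAt_self,
    Ptn.size_row]

theorem sum_conj_rowAt (s : Fin l) (k : ℕ) : ∑ t, (rowAt n s t).conj k = (Ptn.row n).conj k := by
  rw [Fintype.sum_eq_single s fun t ht => by rw [rowAt_of_ne ht, Ptn.conj_empty], rowAt_self]

theorem prod_schurFactor_ne_zero_iff (qv : K) (Qv : Fin l → K) (Λ : Fin l → Ptn) :
    (∏ s, ∏ᶠ i, ∏ j ∈ Finset.range ((Λ s).parts i), schurFactor qv Qv Λ s i j) ≠ 0 ↔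
      ∀ s i j, j < (Λ s).parts i → schurFactor qv Qv Λ s i j ≠ 0 := by
  rw [Finset.prod_ne_zero_iff]
  refine ⟨fun h s => ?_, fun h s _ => ?_⟩
  all_goals
    obtain ⟨N, hN⟩ := (Λ s).eventually_zero
    have hprod : (∏ᶠ i, ∏ j ∈ Finset.range ((Λ s).parts i), schurFactor qv Qv Λ s i j) =
        ∏ i ∈ Finset.range N, ∏ j ∈ Finset.range ((Λ s).parts i), schurFactor qv Qv Λ s i j := by
      refine finprod_eq_prod_of_mulSupport_subset _ fun i hi => ?_
      by_contra hiN
      exact hi (by simp [hN i (by simpa using hiN)])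
  · intro i j hj
    have hs := h s (Finset.mem_univ s)
    rw [hprod, Finset.prod_ne_zero_iff] at hs
    have hi : i < N := by
      by_contra hiN
      simp [hN i (not_lt.mp hiN)] at hj
    exact Finset.prod_ne_zero_iff.mp (hs i (Finset.mem_range.mpr hi)) j (Finset.mem_range.mpr hj)
  · rw [hprod, Finset.prod_ne_zero_iff]
    exact fun i _ => Finset.prod_ne_zero_iff.mpr fun j hj => h s i j (Finset.mem_range.mp hj)

theorem zpow_mul_mul_inv_sub_one_ne_zero_iff {q a b : K} (hb : b ≠ 0) (k : ℤ) :
    q ^ k * a * b⁻¹ - 1 ≠ 0 ↔ q ^ k * a ≠ b := by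
  rw [sub_ne_zero, ne_eq, mul_inv_eq_one₀ hb]

theorem zpow_mul_eq_iff_zpow_neg_mul_eq {q a b : K} (hq : q ≠ 0) (k : ℤ) :
    q ^ k * a = b ↔ q ^ (-k) * b = a := by
  rw [zpow_neg, inv_mul_eq_iff_eq_mul₀ (zpow_ne_zero k hq), eq_comm]

theorem schurFactor_ne_zero_iff (qv : K) {Qv : Fin l → K} (hQ : ∀ s, Qv s ≠ 0)
    (Λ : Fin l → Ptn) (s : Fin l) (i j : ℕ) :
    schurFactor qv Qv Λ s i j ≠ 0 ↔
      (∑ a ∈ Finset.range (ghook (Λ s) (Λ s) i j).toNat, qv ^ a) ≠ 0 ∧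
        ∀ t, t ≠ s → qv ^ (ghook (Λ s) (Λ t) i j) * Qv s ≠ Qv t := by
  simp only [schurFactor, mul_ne_zero_iff, Finset.prod_ne_zero_iff, Finset.mem_erase,
    Finset.mem_univ, and_true, zpow_mul_mul_inv_sub_one_ne_zero_iff (hQ _)]

/-- The polynomial side of the criterion, with the pairs `s < t` replaced by all pairs `s ≠ t`. -/
theorem poincare_ne_zero_iff {qv : K} (Qv : Fin l → K) (hq : qv ≠ 0) :
    ((∏ i ∈ Finset.range n, ∑ j ∈ Finset.range (i + 1), qv ^ j) *
        ∏ s : Fin l, ∏ t ∈ Finset.Ioi s, ∏ k ∈ Finset.Ioo (-(n : ℤ)) (n : ℤ),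
          (qv ^ k * Qv s - Qv t)) ≠ 0 ↔
      (∀ m, m < n → (∑ a ∈ Finset.range (m + 1), qv ^ a) ≠ 0) ∧
        ∀ s t, t ≠ s → ∀ k : ℤ, -(n : ℤ) < k → k < n → qv ^ k * Qv s ≠ Qv t := by
  simp only [mul_ne_zero_iff, Finset.prod_ne_zero_iff, Finset.mem_range, Finset.mem_univ,
    Finset.mem_Ioi, Finset.mem_Ioo, true_imp_iff, sub_ne_zero]
  refine and_congr_right fun _ => ⟨fun h s t hst k hk hk' => ?_, fun h s t hst k hk =>
    h s t hst.ne' k hk.1 hk.2⟩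
  rcases lt_or_gt_of_ne hst with hlt | hlt
  · rw [ne_eq, zpow_mul_eq_iff_zpow_neg_mul_eq hq]
    exact h t s hlt (-k) ⟨by omega, by omega⟩
  · exact h s t hlt k ⟨hk, hk'⟩

end SchurElement

/-- **Ariki's semisimplicity criterion.** A ring homomorphism
`θ : ℤ[q^{±1}, Q_0^{±1}, …, Q_{l-1}^{±1}] → K` into a field is determined by the nonzero
(i.e. invertible) images `qv = θ(q)` and `Qv s = θ(Q_s)`. Then `θ(P(q)) ≠ 0` iff
`θ(s_λ(q)) ≠ 0` for every `l`-partition `λ` of `n`, where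
`P(q) = ∏_{i=1}^n (1+q+⋯+q^{i-1}) ∏_{s<t} ∏_{-n<k<n} (q^k Q_s - Q_t)` and
`s_λ(q) = (-1)^{n(l-1)} q^{-n(λ̄)} ∏_s ∏_{(i,j)∈[λ^s]} ([h^{λ^s,λ^s}_{i,j}]_q
  ∏_{t≠s} (q^{h^{λ^s,λ^t}_{i,j}} Q_s Q_t⁻¹ - 1))`, with `[m]_q = q^{m-1}+⋯+q+1`
and `λ̄` the rearrangement, characterised by `λ̄'_k = Σ_s λ^{s'}_k`. -/
theorem stmt9 (l n : ℕ) (hl : 0 < l) (hn : 0 < n) {K : Type*} [Field K]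
    (qv : K) (Qv : Fin l → K) (hq : qv ≠ 0) (hQ : ∀ s, Qv s ≠ 0) :
    ((∏ i ∈ Finset.range n, ∑ j ∈ Finset.range (i + 1), qv ^ j) *
        ∏ s : Fin l, ∏ t ∈ Finset.Ioi s, ∏ k ∈ Finset.Ioo (-(n : ℤ)) (n : ℤ),
          (qv ^ k * Qv s - Qv t)) ≠ 0
    ↔ ∀ (Λ : Fin l → Ptn), (∑ s, (Λ s).size = n) →
        ∀ b : Ptn, (∀ k, b.conj k = ∑ s, (Λ s).conj k) →
          ((-1 : K) ^ (n * (l - 1)) * qv ^ (-(b.nn : ℤ)) *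
            ∏ s, ∏ᶠ i, ∏ j ∈ Finset.range ((Λ s).parts i),
              ((∑ a ∈ Finset.range (ghook (Λ s) (Λ s) i j).toNat, qv ^ a) *
                ∏ t ∈ Finset.univ.erase s,
                  (qv ^ (ghook (Λ s) (Λ t) i j) * Qv s * (Qv t)⁻¹ - 1))) ≠ 0 := by
  have hunit : ∀ b : Ptn, (-1 : K) ^ (n * (l - 1)) * qv ^ (-(b.nn : ℤ)) ≠ 0 := fun b =>
    mul_ne_zero (pow_ne_zero _ (neg_ne_zero.mpr one_ne_zero)) (zpow_ne_zero _ hq)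
  rw [poincare_ne_zero_iff Qv hq]
  constructor
  · rintro ⟨hsum, hpair⟩ Λ hΛ b -
    refine mul_ne_zero (hunit b) ((prod_schurFactor_ne_zero_iff qv Qv Λ).mpr fun s i j hj =>
      (schurFactor_ne_zero_iff qv hQ Λ s i j).mpr ⟨?_, fun t ht => ?_⟩)
    · have hpos := ghook_self_pos (Λ s) hj
      have hle := ghook_self_le (Λ s) hj
      have hsize : (Λ s).size ≤ n := hΛ ▸ Finset.single_le_sum_of_canonicallyOrdered
        (f := fun r => (Λ r).size) (Finset.mem_univ s)
      obtain ⟨m, hm⟩ := Nat.exists_eq_succ_of_ne_zero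
        (n := (ghook (Λ s) (Λ s) i j).toNat) (by omega)
      rw [hm]
      exact hsum m (by omega)
    · have hsize : (Λ s).size + (Λ t).size ≤ n := by
        rw [← hΛ, ← Finset.sum_pair (f := fun r => (Λ r).size) ht.symm]
        exact Finset.sum_le_sum_of_subset (Finset.subset_univ _)
      have hlow := neg_size_lt_ghook (Λ s) (Λ t) hj
      have hupp := ghook_lt_size_add_size (Λ s) (Λ t) hj
      exact hpair s t ht _ (by omega) (by omega)
  · intro h
    have hrow : ∀ s j, j < n → schurFactor qv Qv (rowAt n s) s 0 j ≠ 0 := fun s j hj =>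
      (prod_schurFactor_ne_zero_iff qv Qv (rowAt n s)).mp (right_ne_zero_of_mul
        (h (rowAt n s) (sum_size_rowAt s) (Ptn.row n) fun k => (sum_conj_rowAt s k).symm))
        s 0 j (by simpa using hj)
    simp only [schurFactor_ne_zero_iff qv hQ, rowAt_self] at hrow
    have hnonneg : ∀ s t, t ≠ s → ∀ k : ℕ, k < n → qv ^ (k : ℤ) * Qv s ≠ Qv t := by
      intro s t ht k hk
      have hst := (hrow s (n - 1 - k) (by omega)).2 t ht
      rwa [rowAt_of_ne ht, ghook_row_empty (by omega),
        show n - 1 - (n - 1 - k) = k by omega] at hst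
    refine ⟨fun m hm => ?_, fun s t ht k hk hk' => ?_⟩
    · have hs := (hrow ⟨0, hl⟩ (n - 1 - m) (by omega)).1
      rwa [ghook_row_self (by omega), Int.toNat_natCast,
        show n - (n - 1 - m) = m + 1 by omega] at hs
    · rcases le_total 0 k with h0 | h0
      · lift k to ℕ using h0
        exact hnonneg s t ht k (by omega)
      · rw [ne_eq, zpow_mul_eq_iff_zpow_neg_mul_eq hq]
        obtain ⟨m, hm⟩ := Int.eq_ofNat_of_zero_le (neg_nonneg.mpr h0)
        rw [hm]
        exact hnonneg t s ht.symm m (by omega)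
end

section
/- Let r be a positive integer, r_0, …, r_{l−1} integers, m_s := r_s/r, and η_l := exp(2π√(−1)/l). Let λ = (λ^0, …, λ^{l−1}) be an l-partition of n, and let θ(s_λ) ∈ ℚ(η_l)(u) be the rational function obtained by substituting q = u^r and Q_j = η_l^j u^{r_j} (j = 0, …, l−1) into the cancellation-free Schur element formula s_λ(q) = (−1)^{n(l−1)} q^{−n(λ̄)} (q−1)^{−n} ∏_{s=0}^{l−1} ∏_{(i,j)∈[λ^s]} ∏_{t=0}^{l−1} (q^{h_{i,j}^{λ^s,λ^t}} Q_s Q_t^{−1} − 1). Then θ(s_λ) is nonzero and its order of vanishing at u = 0 (its u-adic valuation) equals −r( n(λ̄) − Σ_{s=0}^{l−1} Σ_{(i,j)∈[λ^s]} Σ_{0≤t≤l−1, t≠s} min(h_{i,j}^{λ^s,λ^t} + m_s − m_t, 0) ). Equivalently, the a-value a^{(m,r)}(λ), defined as the negative of this valuation, equals r( n(λ̄) − Σ_{s=0}^{l−1} Σ_{(i,j)∈[λ^s]} Σ_{t≠s} min(h_{i,j}^{λ^s,λ^t} + m_s − m_t, 0) ). -/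
/-- `η_l = exp(2π√-1/l)`. -/
noncomputable def etaRoot (l : ℕ) : ℂ := Complex.exp (2 * (Real.pi : ℂ) * Complex.I / (l : ℂ))

open Polynomial in
/-- `f = u ^ v * (a / c)` for polynomials `a`, `c` with nonzero constant term: the rational
function `f` is nonzero with `u`-adic valuation `v`. -/
def HasUVal (f : RatFunc ℂ) (v : ℤ) : Prop :=
  ∃ a c : ℂ[X], a.coeff 0 ≠ 0 ∧ c.coeff 0 ≠ 0 ∧
    f = RatFunc.X ^ v * (algebraMap ℂ[X] (RatFunc ℂ) a / algebraMap ℂ[X] (RatFunc ℂ) c)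

namespace HasUVal

lemma algebraMap_ne_zero {a : Polynomial ℂ} (ha : a.coeff 0 ≠ 0) :
    algebraMap (Polynomial ℂ) (RatFunc ℂ) a ≠ 0 :=
  RatFunc.algebraMap_ne_zero fun h => ha (by simp [h])

lemma ne_zero {f : RatFunc ℂ} {v : ℤ} (hf : HasUVal f v) : f ≠ 0 := by
  obtain ⟨a, c, ha, hc, rfl⟩ := hf
  exact mul_ne_zero (zpow_ne_zero _ RatFunc.X_ne_zero)
    (div_ne_zero (algebraMap_ne_zero ha) (algebraMap_ne_zero hc))

lemma X_zpow_mul (v : ℤ) {a : Polynomial ℂ} (ha : a.coeff 0 ≠ 0) :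
    HasUVal (RatFunc.X ^ v * algebraMap (Polynomial ℂ) (RatFunc ℂ) a) v :=
  ⟨a, 1, ha, by simp, by simp⟩

lemma algebraMap {a : Polynomial ℂ} (ha : a.coeff 0 ≠ 0) :
    HasUVal (algebraMap (Polynomial ℂ) (RatFunc ℂ) a) 0 := by
  simpa using X_zpow_mul 0 ha

lemma one : HasUVal 1 0 := by
  simpa using algebraMap (a := 1) (by simp)

lemma X_zpow (v : ℤ) : HasUVal (RatFunc.X ^ v) v := by
  simpa using X_zpow_mul v (a := 1) (by simp)

lemma mul {f g : RatFunc ℂ} {v w : ℤ} (hf : HasUVal f v) (hg : HasUVal g w) :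
    HasUVal (f * g) (v + w) := by
  obtain ⟨a, c, ha, hc, rfl⟩ := hf
  obtain ⟨a', c', ha', hc', rfl⟩ := hg
  refine ⟨a * a', c * c', ?_, ?_, ?_⟩
  · simpa [Polynomial.mul_coeff_zero] using ⟨ha, ha'⟩
  · simpa [Polynomial.mul_coeff_zero] using ⟨hc, hc'⟩
  · rw [zpow_add₀ RatFunc.X_ne_zero, map_mul, map_mul, mul_div_mul_comm]
    ring

lemma inv {f : RatFunc ℂ} {v : ℤ} (hf : HasUVal f v) : HasUVal f⁻¹ (-v) := by
  obtain ⟨a, c, ha, hc, rfl⟩ := hf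
  exact ⟨c, a, hc, ha, by rw [mul_inv, inv_div, zpow_neg]⟩

lemma prod {ι : Type*} (S : Finset ι) {f : ι → RatFunc ℂ} {v : ι → ℤ}
    (h : ∀ i ∈ S, HasUVal (f i) (v i)) : HasUVal (∏ i ∈ S, f i) (∑ i ∈ S, v i) := by
  classical
  induction S using Finset.induction_on with
  | empty => simpa using one
  | insert i S hi ih =>
    rw [Finset.prod_insert hi, Finset.sum_insert hi]
    exact (h i (Finset.mem_insert_self i S)).mul
      (ih fun k hk => h k (Finset.mem_insert_of_mem hk))

lemma pow {f : RatFunc ℂ} {v : ℤ} (hf : HasUVal f v) (k : ℕ) : HasUVal (f ^ k) (k * v) := by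
  simpa using prod (Finset.range k) (fun _ _ => hf)

lemma C_mul_X_zpow_sub_one {c : ℂ} (hc : c ≠ 0) {e : ℤ} (h : e ≠ 0 ∨ c ≠ 1) :
    HasUVal (RatFunc.C c * RatFunc.X ^ e - 1) (min e 0) := by
  rcases lt_trichotomy e 0 with he | rfl | he
  · obtain ⟨k, rfl⟩ : ∃ k : ℕ, e = -(k : ℤ) := ⟨e.natAbs, by omega⟩
    have hk : k ≠ 0 := by omega
    rw [min_eq_left he.le]
    convert X_zpow_mul (-(k : ℤ)) (a := Polynomial.C c - Polynomial.X ^ k) ?_ using 1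
    · have hX : (RatFunc.X : RatFunc ℂ) ^ k ≠ 0 := pow_ne_zero _ RatFunc.X_ne_zero
      simp only [map_sub, map_pow, RatFunc.algebraMap_C, RatFunc.algebraMap_X, zpow_neg,
        zpow_natCast]
      field_simp
    · simpa [Polynomial.coeff_X_pow, hk.symm] using hc
  · have hc1 : c ≠ 1 := h.resolve_left (by simp)
    have hval := algebraMap (a := Polynomial.C (c - 1)) (by simpa [sub_eq_zero] using hc1)
    simpa [RatFunc.algebraMap_C] using hval
  · obtain ⟨k, rfl⟩ : ∃ k : ℕ, e = (k : ℤ) := ⟨e.toNat, by omega⟩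
    have hk : k ≠ 0 := by omega
    rw [min_eq_right he.le]
    convert algebraMap (a := Polynomial.C c * Polynomial.X ^ k - 1) ?_ using 1
    · simp [RatFunc.algebraMap_C]
    · simp [Polynomial.coeff_X_pow, hk.symm]

end HasUVal

namespace Ptn

lemma succ_le_conj (p : Ptn) {i j : ℕ} (h : j < p.parts i) : i + 1 ≤ p.conj j := by
  obtain ⟨N, hN⟩ := p.eventually_zero
  have hfin : Finite {k : ℕ // j < p.parts k} :=
    ((Set.finite_lt_nat N).subset fun k (hk : j < p.parts k) => by
      by_contra hkN
      have := hN k (not_lt.mp hkN)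
      omega).to_subtype
  have hcard := Nat.card_le_card_of_injective
    (fun k : Fin (i + 1) => (⟨k, h.trans_le (p.antitone' (Nat.lt_succ_iff.mp k.2))⟩ :
      {k : ℕ // j < p.parts k}))
    fun x y hxy => Fin.ext (congrArg Subtype.val hxy)
  simpa [conj] using hcard

lemma ghook_self_pos (p : Ptn) {i j : ℕ} (h : j < p.parts i) : 0 < ghook p p i j := by
  have := p.succ_le_conj h
  unfold ghook
  omega

end Ptn

lemma hasUVal_schurFactor {l r : ℕ} (hr : 0 < r) (rv : Fin l → ℤ) (Λ : Fin l → Ptn)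
    (s t : Fin l) {i j : ℕ} (hj : j < (Λ s).parts i) :
    HasUVal ((RatFunc.X ^ (r : ℤ)) ^ ghook (Λ s) (Λ t) i j *
        (RatFunc.C (etaRoot l ^ (s : ℕ)) * RatFunc.X ^ rv s) *
        (RatFunc.C (etaRoot l ^ (t : ℕ)) * RatFunc.X ^ rv t)⁻¹ - 1)
      (min (r * ghook (Λ s) (Λ t) i j + rv s - rv t) 0) := by
  have hη : etaRoot l ≠ 0 := Complex.exp_ne_zero _
  have hη' : IsPrimitiveRoot (etaRoot l) l := Complex.isPrimitiveRoot_exp l s.pos.ne'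
  convert HasUVal.C_mul_X_zpow_sub_one
    (c := etaRoot l ^ (s : ℕ) * (etaRoot l ^ (t : ℕ))⁻¹)
    (e := r * ghook (Λ s) (Λ t) i j + rv s - rv t) (by positivity) ?_ using 2
  · rw [zpow_sub₀ RatFunc.X_ne_zero, zpow_add₀ RatFunc.X_ne_zero, zpow_mul, map_mul, map_inv₀,
      mul_inv]
    ring
  · by_cases hst : s = t
    · subst hst
      left
      have := (Λ s).ghook_self_pos hj
      have : 0 < (r : ℤ) * ghook (Λ s) (Λ s) i j := by positivity
      omega
    · right
      intro h
      rw [mul_inv_eq_one₀ (pow_ne_zero _ hη)] at h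
      exact hst (Fin.ext (hη'.pow_inj s.2 t.2 h))


/-- Substituting `q = u^r`, `Q_j = η_l^j u^{r_j}` into the
cancellation-free Schur element formula gives a nonzero rational function
`θ(s_λ) ∈ ℚ(η_l)(u) ⊆ ℂ(u)` whose `u`-adic valuation `v` (i.e. `θ(s_λ) = u^v·(a/c)` with
`a, c` polynomials of nonzero constant term) satisfies
`v = -r(n(λ̄) - Σ_s Σ_{(i,j)∈[λ^s]} Σ_{t≠s} min(h^{λ^s,λ^t}_{i,j} + m_s - m_t, 0))`,
where `m_s = r_s/r`; that is, the a-value `a^{(m,r)}(λ) = -v` equals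
`r(n(λ̄) - Σ_s Σ_{(i,j)} Σ_{t≠s} min(h^{λ^s,λ^t}_{i,j} + m_s - m_t, 0))`. -/
theorem stmt10 (l n r : ℕ) (hl : 0 < l) (hr : 0 < r) (rv : Fin l → ℤ)
    (m : Fin l → ℚ) (hm : ∀ s, m s = (rv s : ℚ) / (r : ℚ))
    (Λ : Fin l → Ptn) (hn : ∑ s, (Λ s).size = n)
    (b : Ptn) (hb : ∀ k, b.conj k = ∑ s, (Λ s).conj k) :
    let u : RatFunc ℂ := RatFunc.X
    let Qf : Fin l → RatFunc ℂ := fun s => RatFunc.C (etaRoot l ^ (s : ℕ)) * u ^ (rv s)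
    let qf : RatFunc ℂ := u ^ (r : ℤ)
    let θs : RatFunc ℂ :=
      (-1 : RatFunc ℂ) ^ (n * (l - 1)) * qf ^ (-(b.nn : ℤ)) * (qf - 1) ^ (-(n : ℤ)) *
        ∏ s, ∏ᶠ i, ∏ j ∈ Finset.range ((Λ s).parts i), ∏ t,
          (qf ^ (ghook (Λ s) (Λ t) i j) * Qf s * (Qf t)⁻¹ - 1)
    θs ≠ 0 ∧
      ∃ (v : ℤ) (a c : Polynomial ℂ), a.coeff 0 ≠ 0 ∧ c.coeff 0 ≠ 0 ∧
        θs = u ^ v * (algebraMap (Polynomial ℂ) (RatFunc ℂ) a /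
            algebraMap (Polynomial ℂ) (RatFunc ℂ) c) ∧
        (v : ℚ) = -((r : ℚ) * ((b.nn : ℚ) -
          ∑ s, ∑ᶠ i, ∑ j ∈ Finset.range ((Λ s).parts i), ∑ t ∈ Finset.univ.erase s,
            min (((ghook (Λ s) (Λ t) i j : ℤ) : ℚ) + m s - m t) 0)) := by
  intro u Qf qf θs
  choose N hN using fun s => (Λ s).eventually_zero
  have hparts : ∀ s i, i ∉ Finset.range (N s) → (Λ s).parts i = 0 := fun s i hi =>
    hN s i (by simpa using hi)
  have hfactors : HasUVal
      (∏ s, ∏ᶠ i, ∏ j ∈ Finset.range ((Λ s).parts i), ∏ t,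
        (qf ^ (ghook (Λ s) (Λ t) i j) * Qf s * (Qf t)⁻¹ - 1))
      (∑ s, ∑ i ∈ Finset.range (N s), ∑ j ∈ Finset.range ((Λ s).parts i), ∑ t,
        min (r * ghook (Λ s) (Λ t) i j + rv s - rv t) 0) := by
    refine HasUVal.prod _ fun s _ => ?_
    rw [finprod_eq_prod_of_mulSupport_subset (s := Finset.range (N s))]
    · exact HasUVal.prod _ fun i _ => HasUVal.prod _ fun j hj => HasUVal.prod _ fun t _ =>
        hasUVal_schurFactor hr rv Λ s t (Finset.mem_range.mp hj)
    · intro i hi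
      by_contra hi'
      exact hi (by simp [hparts s i hi'])
  have hq : HasUVal (qf - 1) 0 := by
    have h := HasUVal.C_mul_X_zpow_sub_one (c := 1) one_ne_zero (e := r) (Or.inl (by omega))
    simpa [qf, u] using h
  have hneg : HasUVal (-1) 0 := by
    simpa using HasUVal.algebraMap (a := -1) (by simp)
  have hθ := (((hneg.pow (n * (l - 1))).mul (HasUVal.X_zpow (r * -(b.nn : ℤ)))).mul
    (hq.pow n).inv).mul hfactors
  rw [zpow_mul, ← zpow_natCast (qf - 1), ← zpow_neg] at hθ
  refine ⟨hθ.ne_zero, ?_⟩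
  obtain ⟨a, c, ha, hc, h⟩ := hθ
  refine ⟨_, a, c, ha, hc, h, ?_⟩
  have hr' : (0 : ℚ) < r := by exact_mod_cast hr
  have hmin : ∀ s t i j, r * min (((ghook (Λ s) (Λ t) i j : ℤ) : ℚ) + m s - m t) 0 =
      ((min (r * ghook (Λ s) (Λ t) i j + rv s - rv t) 0 : ℤ) : ℚ) := by
    intro s t i j
    rw [mul_min_of_nonneg _ _ hr'.le, hm, hm]
    push_cast
    congr 1
    · field_simp
    · simp
  have hsum : ((∑ s, ∑ i ∈ Finset.range (N s), ∑ j ∈ Finset.range ((Λ s).parts i), ∑ t,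
        min (r * ghook (Λ s) (Λ t) i j + rv s - rv t) 0 : ℤ) : ℚ) =
      (r : ℚ) * ∑ s, ∑ᶠ i, ∑ j ∈ Finset.range ((Λ s).parts i), ∑ t ∈ Finset.univ.erase s,
        min (((ghook (Λ s) (Λ t) i j : ℤ) : ℚ) + m s - m t) 0 := by
    rw [Int.cast_sum, Finset.mul_sum]
    refine Finset.sum_congr rfl fun s _ => ?_
    rw [finsum_eq_sum_of_support_subset (s := Finset.range (N s))]
    · simp only [Finset.mul_sum, hmin, Int.cast_sum]
      refine Finset.sum_congr rfl fun i _ => Finset.sum_congr rfl fun j hj => ?_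
      have hpos := (Λ s).ghook_self_pos (Finset.mem_range.mp hj)
      have hs : min ((r : ℤ) * ghook (Λ s) (Λ s) i j + rv s - rv s) 0 = 0 :=
        min_eq_right (by rw [add_sub_cancel_right]; positivity)
      rw [← Finset.add_sum_erase _ _ (Finset.mem_univ s), hs]
      simp
    · intro i hi
      by_contra hi'
      exact hi (by simp [hparts s i hi'])
  rw [mul_sub, ← hsum]
  simp only [Int.cast_add, Int.cast_mul, Int.cast_neg, Int.cast_natCast, Int.cast_zero]
  ring
end

section
/- Let η ∈ ℂ be a primitive e-th root of unity with e > 1, let v_0, …, v_{l−1} be integers, and let λ = (λ^0, …, λ^{l−1}) be an l-partition of n. Then the complex number (−1)^{n(l−1)} η^{−n(λ̄)} · ∏_{s=0}^{l−1} ∏_{(i,j)∈[λ^s]} ( [h_{i,j}^{λ^s,λ^s}]_η · ∏_{0≤t≤l−1, t≠s} (η^{h_{i,j}^{λ^s,λ^t} + v_s − v_t} − 1) ) is nonzero if and only if for all 0 ≤ s, t ≤ l−1 and all (i,j) ∈ [λ^s], e does not divide h_{i,j}^{λ^s,λ^t} + v_s − v_t. (This number is the image of the Schur element s_λ under the specialisation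 θ(q) = η, θ(Q_j) = η^{v_j}, and its nonvanishing characterises the l-partitions λ lying in a block of defect 0.) -/
namespace Ptn

theorem finite_lt_parts (p : Ptn) (k : ℕ) : Finite {i : ℕ // k < p.parts i} := by
  obtain ⟨N, hN⟩ := p.eventually_zero
  refine Set.Finite.to_subtype ((Set.finite_Iio N).subset fun i hi => ?_)
  by_contra h
  have h0 := hN i (not_lt.mp h)
  have hi' : k < p.parts i := hi
  omega

theorem lt_conj_of_lt_parts (p : Ptn) {i j : ℕ} (h : j < p.parts i) : i < p.conj j := by
  have := p.finite_lt_parts j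
  have hcard : Nat.card (Fin (i + 1)) ≤ p.conj j :=
    Nat.card_le_card_of_injective
      (fun a : Fin (i + 1) =>
        (⟨a, h.trans_le (p.antitone' (Nat.lt_succ_iff.mp a.2))⟩ : {i : ℕ // j < p.parts i}))
      fun a b hab => Fin.ext (congrArg Subtype.val hab)
  simpa [Nat.succ_le_iff] using hcard

theorem finprod_prod_range_parts_ne_zero_iff (p : Ptn) (f : ℕ → ℕ → ℂ) :
    (∏ᶠ i, ∏ j ∈ Finset.range (p.parts i), f i j) ≠ 0 ↔
      ∀ i j, j < p.parts i → f i j ≠ 0 := by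
  obtain ⟨N, hN⟩ := p.eventually_zero
  rw [finprod_eq_prod_of_mulSupport_subset (s := Finset.range N)]
  · simp only [Finset.prod_ne_zero_iff, Finset.mem_range]
    refine ⟨fun h i j hj => h i ?_ j hj, fun h i _ j hj => h i j hj⟩
    by_contra hi
    have h0 := hN i (not_lt.mp hi)
    omega
  · intro i hi
    by_contra hiN
    refine hi ?_
    have h0 : p.parts i = 0 := hN i (by simpa using hiN)
    simp [h0]

end Ptn

theorem ghook_self_pos_s12 (p : Ptn) {i j : ℕ} (h : j < p.parts i) : 0 < ghook p p i j := by
  have := p.lt_conj_of_lt_parts h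
  unfold ghook
  omega

theorem IsPrimitiveRoot.geom_sum_ne_zero_iff {η : ℂ} {e : ℕ} (hη : IsPrimitiveRoot η e)
    (he : 1 < e) (m : ℕ) : (∑ a ∈ Finset.range m, η ^ a) ≠ 0 ↔ ¬ e ∣ m := by
  have h1 : η - 1 ≠ 0 := sub_ne_zero.mpr (hη.ne_one he)
  rw [← hη.pow_eq_one_iff_dvd, ← sub_eq_zero, ← geom_sum_mul, mul_eq_zero, not_or]
  exact ⟨fun h => ⟨h, h1⟩, fun h => h.1⟩

/-- **blocks of defect 0.** Let `η ∈ ℂ` be a primitive `e`-th root of unity,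
`e > 1`, `v_0, …, v_{l-1} ∈ ℤ`, and `λ` an `l`-partition of `n` (with `λ̄` its rearrangement
of parts, characterised by `λ̄'_k = Σ_s λ^{s'}_k`). Then
`(-1)^{n(l-1)} η^{-n(λ̄)} ∏_s ∏_{(i,j)∈[λ^s]} ([h^{λ^s,λ^s}_{i,j}]_η
  ∏_{t≠s} (η^{h^{λ^s,λ^t}_{i,j}+v_s-v_t} - 1)) ≠ 0`
iff for all `s, t` and all nodes `(i,j)` of `λ^s`, `e ∤ h^{λ^s,λ^t}_{i,j} + v_s - v_t`.
Here `[m]_η = η^{m-1} + ⋯ + η + 1`. -/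
theorem stmt12 (l n e : ℕ) (he : 1 < e) (η : ℂ) (hη : IsPrimitiveRoot η e)
    (v : Fin l → ℤ) (Λ : Fin l → Ptn) (hn : ∑ s, (Λ s).size = n)
    (b : Ptn) (hb : ∀ k, b.conj k = ∑ s, (Λ s).conj k) :
    ((-1 : ℂ) ^ (n * (l - 1)) * η ^ (-(b.nn : ℤ)) *
        ∏ s, ∏ᶠ i, ∏ j ∈ Finset.range ((Λ s).parts i),
          ((∑ a ∈ Finset.range (ghook (Λ s) (Λ s) i j).toNat, η ^ a) *
            ∏ t ∈ Finset.univ.erase s,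
              (η ^ (ghook (Λ s) (Λ t) i j + v s - v t) - 1))) ≠ 0
    ↔ ∀ (s t : Fin l) (i j : ℕ), j < (Λ s).parts i →
        ¬ ((e : ℤ) ∣ ghook (Λ s) (Λ t) i j + v s - v t) := by
  have hη0 : η ≠ 0 := hη.ne_zero (by omega)
  have hpre : (-1 : ℂ) ^ (n * (l - 1)) * η ^ (-(b.nn : ℤ)) ≠ 0 :=
    mul_ne_zero (pow_ne_zero _ (by norm_num)) (zpow_ne_zero _ hη0)
  rw [mul_ne_zero_iff, and_iff_right hpre, Finset.prod_ne_zero_iff]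
  simp only [Finset.mem_univ, forall_const, Ptn.finprod_prod_range_parts_ne_zero_iff,
    mul_ne_zero_iff, Finset.prod_ne_zero_iff, Finset.mem_erase, and_true, sub_ne_zero, ne_eq,
    hη.zpow_eq_one_iff_dvd]
  have hdiag : ∀ s i j, j < (Λ s).parts i →
      (¬ (∑ a ∈ Finset.range (ghook (Λ s) (Λ s) i j).toNat, η ^ a) = 0 ↔
        ¬ ((e : ℤ) ∣ ghook (Λ s) (Λ s) i j + v s - v s)) := fun s i j hj => by
    rw [add_sub_cancel_right, ← ne_eq, hη.geom_sum_ne_zero_iff he, ← Int.natCast_dvd_natCast,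
      Int.toNat_of_nonneg (ghook_self_pos_s12 _ hj).le]
  constructor
  · intro h s t i j hj
    obtain rfl | hts := eq_or_ne t s
    · exact (hdiag t i j hj).mp (h t i j hj).1
    · exact (h s i j hj).2 t hts
  · exact fun h s i j hj => ⟨(hdiag s i j hj).mpr (h s s i j hj), fun t _ => h s t i j hj⟩
end

section
/- Let h ≥ 1 and let μ^1, …, μ^h and ν^1, …, ν^h be finite multisets of positive rational numbers with |μ^i| = |ν^i| and μ^i ⊵ ν^i for each i = 1, …, h. Set μ := μ^1 ⊔ ⋯ ⊔ μ^h and ν := ν^1 ⊔ ⋯ ⊔ ν^h (disjoint union of multisets). Then μ ⊵ ν, and μ = ν (as multisets) only when μ^i = ν^i for all i = 1, …, h. -/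
/-- The elements of a finite multiset of rationals, arranged in weakly decreasing order. -/
def sortedDesc (M : Multiset ℚ) : List ℚ := M.sort (· ≥ ·)

/-- Dominance order for finite multisets of rationals (of the same cardinality):
`X ⊵ Y` iff every partial sum of the decreasing rearrangement of `X` is at least the
corresponding partial sum for `Y`. -/
def Dominates (X Y : Multiset ℚ) : Prop :=
  ∀ t : ℕ, ((sortedDesc Y).take t).sum ≤ ((sortedDesc X).take t).sum

/-- The total excess `∑ max (x - c) 0` of the elements of a multiset over the level `c`. -/
def excess (c : ℚ) (M : Multiset ℚ) : ℚ := (M.map fun x => max (x - c) 0).sum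

theorem excess_eq_sortedDesc (c : ℚ) (M : Multiset ℚ) :
    excess c M = ((sortedDesc M).map fun x => max (x - c) 0).sum := by
  conv_lhs => rw [excess, ← Multiset.sort_eq M (· ≥ ·)]
  rw [Multiset.map_coe, Multiset.sum_coe, sortedDesc]

theorem excess_sum {ι : Type*} (s : Finset ι) (c : ℚ) (M : ι → Multiset ℚ) :
    excess c (∑ i ∈ s, M i) = ∑ i ∈ s, excess c (M i) := by
  classical
  induction s using Finset.induction_on with
  | empty => simp [excess]
  | insert a s ha ih =>
    rw [Finset.sum_insert ha, Finset.sum_insert ha, ← ih]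
    simp [excess]

theorem length_sortedDesc (M : Multiset ℚ) : (sortedDesc M).length = Multiset.card M :=
  Multiset.length_sort _

theorem pairwise_sortedDesc (M : Multiset ℚ) : (sortedDesc M).Pairwise (· ≥ ·) :=
  Multiset.pairwise_sort M _

theorem sum_posPart_nonneg (c : ℚ) (L : List ℚ) : 0 ≤ (L.map fun x => max (x - c) 0).sum :=
  List.sum_nonneg (by simp)

theorem sum_take_sub_le_sum_posPart (c : ℚ) (L : List ℚ) (t : ℕ) (ht : t ≤ L.length) :
    (L.take t).sum - t * c ≤ (L.map fun x => max (x - c) 0).sum := by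
  induction L generalizing t with
  | nil => simp_all
  | cons a L ih =>
    cases t with
    | zero => simpa using sum_posPart_nonneg c (a :: L)
    | succ t =>
      have hL := ih t (by simpa using ht)
      have ha := le_max_left (a - c) 0
      simp only [List.take_succ_cons, List.sum_cons, List.map_cons]
      push_cast
      linarith

theorem sum_posPart_eq_zero {c : ℚ} {L : List ℚ} (hL : ∀ x ∈ L, x ≤ c) :
    (L.map fun x => max (x - c) 0).sum = 0 := by
  apply List.sum_eq_zero
  simp only [List.mem_map]
  rintro _ ⟨x, hx, rfl⟩
  exact max_eq_right (sub_nonpos.2 (hL x hx))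

theorem exists_sum_posPart_eq_sum_take_sub (c : ℚ) {L : List ℚ} (hL : L.Pairwise (· ≥ ·)) :
    ∃ t ≤ L.length, (L.map fun x => max (x - c) 0).sum = (L.take t).sum - t * c := by
  induction L with
  | nil => exact ⟨0, by simp⟩
  | cons a L ih =>
    rw [List.pairwise_cons] at hL
    rcases le_total a c with hac | hca
    · refine ⟨0, by simp, ?_⟩
      rw [sum_posPart_eq_zero]
      · simp
      · simpa [hac] using fun x hx => (hL.1 x hx).trans hac
    · obtain ⟨t, ht, hsum⟩ := ih hL.2
      refine ⟨t + 1, by simpa using ht, ?_⟩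
      simp only [List.take_succ_cons, List.sum_cons, List.map_cons, hsum,
        max_eq_left (sub_nonneg.2 hca)]
      push_cast
      ring

theorem exists_level_sum_posPart_eq_sum_take_sub {L : List ℚ} (hL : L.Pairwise (· ≥ ·))
    (t : ℕ) (ht : t + 1 ≤ L.length) :
    ∃ c ∈ L, (L.map fun x => max (x - c) 0).sum = (L.take (t + 1)).sum - (t + 1) * c := by
  induction L generalizing t with
  | nil => simp at ht
  | cons a L ih =>
    rw [List.pairwise_cons] at hL
    cases t with
    | zero =>
      refine ⟨a, by simp, ?_⟩
      rw [sum_posPart_eq_zero]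
      · simp
      · simpa using hL.1
    | succ t =>
      obtain ⟨c, hc, hsum⟩ := ih hL.2 t (by simpa using ht)
      refine ⟨c, by simp [hc], ?_⟩
      rw [List.take_succ_cons]
      simp only [List.sum_cons, List.map_cons, hsum, max_eq_left (sub_nonneg.2 (hL.1 c hc))]
      push_cast
      ring

theorem dominates_iff_excess_le {X Y : Multiset ℚ}
    (hcard : Multiset.card X = Multiset.card Y) :
    Dominates X Y ↔ ∀ c, excess c Y ≤ excess c X := by
  have hlen : (sortedDesc X).length = (sortedDesc Y).length := by
    simpa only [length_sortedDesc] using hcard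
  constructor
  · intro hdom c
    rw [excess_eq_sortedDesc, excess_eq_sortedDesc]
    obtain ⟨t, ht, hsum⟩ := exists_sum_posPart_eq_sum_take_sub c (pairwise_sortedDesc Y)
    have hX := sum_take_sub_le_sum_posPart c (sortedDesc X) t (hlen ▸ ht)
    linarith [hdom t]
  · intro hexc
    have key : ∀ t ≤ (sortedDesc X).length,
        ((sortedDesc Y).take t).sum ≤ ((sortedDesc X).take t).sum := by
      intro t ht
      cases t with
      | zero => simp
      | succ t =>
        obtain ⟨c, -, hsum⟩ :=
          exists_level_sum_posPart_eq_sum_take_sub (pairwise_sortedDesc X) t ht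
        have hY := sum_take_sub_le_sum_posPart c (sortedDesc Y) (t + 1) (hlen ▸ ht)
        have hc := hexc c
        rw [excess_eq_sortedDesc, excess_eq_sortedDesc] at hc
        push_cast at hY
        linarith
    intro t
    rcases le_total t (sortedDesc X).length with ht | ht
    · exact key t ht
    · have hfull := key _ le_rfl
      rw [List.take_of_length_le hlen.ge, List.take_length] at hfull
      rwa [List.take_of_length_le ht, List.take_of_length_le (hlen ▸ ht)]

theorem Dominates.antisymm {X Y : Multiset ℚ} (hcard : Multiset.card X = Multiset.card Y)
    (hXY : Dominates X Y) (hYX : Dominates Y X) : X = Y := by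
  have hlists : sortedDesc X = sortedDesc Y := by
    refine List.ext_getElem (by simpa only [length_sortedDesc] using hcard) fun i hX hY => ?_
    have hi := le_antisymm (hYX i) (hXY i)
    have hs := le_antisymm (hYX (i + 1)) (hXY (i + 1))
    rw [List.sum_take_succ _ _ hX, List.sum_take_succ _ _ hY] at hs
    linarith
  rw [← Multiset.sort_eq X (· ≥ ·), ← Multiset.sort_eq Y (· ≥ ·)]
  exact congrArg _ hlists

/-- Let `h ≥ 1` and let `μ^1, …, μ^h` and `ν^1, …, ν^h` be finite
multisets of positive rationals with `|μ^i| = |ν^i|` and `μ^i ⊵ ν^i` for each `i`.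
Then `μ^1 ⊔ ⋯ ⊔ μ^h ⊵ ν^1 ⊔ ⋯ ⊔ ν^h`, with equality (as multisets) only when
`μ^i = ν^i` for all `i`. -/
theorem stmt13 (h : ℕ) (hh : 1 ≤ h) (μ ν : Fin h → Multiset ℚ)
    (hμpos : ∀ i, ∀ x ∈ μ i, 0 < x) (hνpos : ∀ i, ∀ x ∈ ν i, 0 < x)
    (hcard : ∀ i, Multiset.card (μ i) = Multiset.card (ν i))
    (hdom : ∀ i, Dominates (μ i) (ν i)) :
    Dominates (∑ i, μ i) (∑ i, ν i) ∧
      ((∑ i, μ i) = (∑ i, ν i) → ∀ i, μ i = ν i) := by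
  have hexc : ∀ i c, excess c (ν i) ≤ excess c (μ i) := fun i =>
    (dominates_iff_excess_le (hcard i)).1 (hdom i)
  constructor
  · rw [dominates_iff_excess_le (by simp [hcard])]
    intro c
    rw [excess_sum, excess_sum]
    exact Finset.sum_le_sum fun i _ => hexc i c
  · intro heq i
    refine (hdom i).antisymm (hcard i) ((dominates_iff_excess_le (hcard i).symm).2 fun c => ?_)
    have hsum : ∑ j, excess c (ν j) = ∑ j, excess c (μ j) := by
      rw [← excess_sum, ← excess_sum, heq]
    exact ((Finset.sum_eq_sum_iff_of_le fun j _ => hexc j c).1 hsum i (Finset.mem_univ i)).ge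
end
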